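/- The generalized Petersen graph P(n, k), for n ≥ 3 and 1 ≤ k < n/2, is dual Hamiltonian: its vertex set can be partitioned into sets A and B such that both induced subgraphs are trees, equivalently it has a bond of size n + 2 = |E| - |V| + 2. -/

import Mathlib

open SimpleGraph

/-- An edge-cut of `G`: a set of edges of `G` whose deletion disconnects `G`. -/
def IsEdgeCut {V : Type*} (G : SimpleGraph V) (S : Set (Sym2 V)) : Prop :=
  S ⊆ G.edgeSet ∧ ¬ (G.deleteEdges S).Connected

/-- A bond: a minimal nonempty edge-cut. -/
def IsBond {V : Type*} (G : SimpleGraph V) (S : Set (Sym2 V)) : Prop :=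
  S.Nonempty ∧ IsEdgeCut G S ∧ ∀ T ⊂ S, T.Nonempty → ¬ IsEdgeCut G T

/-- A largest bond: a bond of maximum size. -/
def IsLargestBond {V : Type*} (G : SimpleGraph V) (S : Set (Sym2 V)) : Prop :=
  IsBond G S ∧ ∀ T, IsBond G T → T.ncard ≤ S.ncard

/-- The set of edges of `G` between `X` and its complement. -/
def crossEdges {V : Type*} (G : SimpleGraph V) (X : Set V) : Set (Sym2 V) :=
  {e ∈ G.edgeSet | ∃ x ∈ X, ∃ y ∈ Xᶜ, e = s(x, y)}

/-- `G` is 2-connected: at least 3 vertices and connected after deleting any ≤ 1 vertices. -/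
def TwoConnected {V : Type*} (G : SimpleGraph V) : Prop :=
  3 ≤ Nat.card V ∧ ∀ s : Set V, s.ncard ≤ 1 → (G.induce sᶜ).Connected

/-- `G` is 3-connected: at least 4 vertices and connected after deleting any ≤ 2 vertices. -/
def ThreeConnected {V : Type*} (G : SimpleGraph V) : Prop :=
  4 ≤ Nat.card V ∧ ∀ s : Set V, s.ncard ≤ 2 → (G.induce sᶜ).Connected

/-- A longest cycle of `G`. -/
def IsLongestCycle {V : Type*} (G : SimpleGraph V) {v : V} (C : G.Walk v v) : Prop :=
  C.IsCycle ∧ ∀ (u : V) (D : G.Walk u u), D.IsCycle → D.length ≤ C.length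

/-- The generalized Petersen graph `P(n, k)`: outer vertices `Sum.inl i` ("xᵢ") and
inner vertices `Sum.inr i` ("yᵢ"), with edges `xᵢxᵢ₊₁`, `xᵢyᵢ`, `yᵢyᵢ₊ₖ` (indices mod n). -/
def GPetersen (n k : ℕ) : SimpleGraph (ZMod n ⊕ ZMod n) :=
  SimpleGraph.fromRel (fun a b =>
    (∃ i : ZMod n, a = Sum.inl i ∧ b = Sum.inl (i + 1)) ∨
    (∃ i : ZMod n, a = Sum.inl i ∧ b = Sum.inr i) ∨
    (∃ i : ZMod n, a = Sum.inr i ∧ b = Sum.inr (i + (k : ZMod n))))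

/-!
Colour `xᵢ` with `k ≤ i < 2k` and `yᵢ` with `k ≤ i` black, the remaining vertices white. Since
`2k < n`, the white `x`'s form a path through `xₙ₋₁x₀`, and the white `y`'s are pairwise
nonadjacent, so each is a leaf hanging from that path. The black `x`'s form a path as well, and from
each of them hangs the path `yᵢ, yᵢ₊ₖ, yᵢ₊₂ₖ, …`, which stops before its index wraps around modulo
`n`. Two complementary trees leave `|E| - (|V| - 2)` edges for the cut between them, and `|E| = 3n`.
-/

section Trees

variable {V α : Type*} {G : SimpleGraph V}

theorem connected_of_exists_adj_lt [Preorder α] [WellFoundedLT α] (rank : V → α) (r : V)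
    (hdown : ∀ v, v ≠ r → ∃ w, G.Adj v w ∧ rank w < rank v) : G.Connected := by
  refine (connected_iff_exists_forall_reachable G).2 ⟨r, fun v ↦ ?_⟩
  induction v using (InvImage.wf rank wellFounded_lt).induction with
  | _ v ih =>
    obtain rfl | hv := eq_or_ne v r
    · exact Reachable.refl _
    · obtain ⟨w, hadj, hlt⟩ := hdown v hv
      exact (ih w hlt).trans hadj.symm.reachable

theorem isAcyclic_of_adj_le_unique [LinearOrder α] (rank : V → α)
    (huniq : ∀ v w w', G.Adj v w → G.Adj v w' → rank w ≤ rank v → rank w' ≤ rank v → w = w') :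
    G.IsAcyclic := by
  classical
  -- The two neighbours, along a cycle, of its vertex of maximal rank contradict `huniq`.
  intro u c hc
  obtain ⟨v, hv, hmax⟩ := c.support.toFinset.exists_max_image rank ⟨u, by simp⟩
  rw [List.mem_toFinset] at hv
  have hle : ∀ w ∈ (c.rotate v hv).support, rank w ≤ rank v := fun w hw ↦
    hmax w (by simpa using hw)
  have hrot : (c.rotate v hv).IsCycle := hc.rotate hv
  exact hrot.snd_ne_penultimate <| huniq v _ _ (Walk.adj_snd hrot.not_nil)
    (Walk.adj_penultimate hrot.not_nil).symm (hle _ <| Walk.getVert_mem_support _ _)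
    (hle _ <| Walk.getVert_mem_support _ _)

theorem isTree_induce_of_parent [LinearOrder α] [WellFoundedLT α] {S : Set V} {r : V} (hr : r ∈ S)
    (rank : V → α) (parent : V → V)
    (hparent : ∀ v ∈ S, v ≠ r → parent v ∈ S ∧ G.Adj v (parent v) ∧ rank (parent v) < rank v)
    (huniq : ∀ v ∈ S, ∀ w ∈ S, G.Adj v w → rank w ≤ rank v → w = parent v) :
    (G.induce S).IsTree where
  connected := connected_of_exists_adj_lt (fun v ↦ rank v) ⟨r, hr⟩ fun v hv ↦
    let ⟨hmem, hadj, hlt⟩ := hparent v v.2 fun h ↦ hv (Subtype.ext h)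
    ⟨⟨parent v, hmem⟩, hadj, hlt⟩
  isAcyclic := isAcyclic_of_adj_le_unique (fun v ↦ rank v) fun v w w' hw hw' hle hle' ↦
    Subtype.ext <| (huniq v v.2 w w.2 hw hle).trans (huniq v v.2 w' w'.2 hw' hle').symm

end Trees

section CrossEdges

variable {V : Type*} {G : SimpleGraph V} {A : Set V}

theorem mk_mem_crossEdges {u v : V} :
    s(u, v) ∈ crossEdges G A ↔ G.Adj u v ∧ (u ∈ A ∧ v ∉ A ∨ v ∈ A ∧ u ∉ A) := by
  simp only [crossEdges, Set.mem_ofPred_eq, mem_edgeSet, Set.mem_compl_iff, Sym2.eq_iff]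
  grind

theorem crossEdges_compl : crossEdges G Aᶜ = crossEdges G A := by
  ext ⟨u, v⟩
  simp only [mk_mem_crossEdges, Set.mem_compl_iff]
  tauto

theorem crossEdges_eq_sdiff : crossEdges G A = G.edgeSet \ (A.sym2 ∪ Aᶜ.sym2) := by
  ext ⟨u, v⟩
  simp only [mk_mem_crossEdges, Set.mem_sdiff, mem_edgeSet, Set.mem_union, Set.mk_mem_sym2_iff,
    Set.mem_compl_iff]
  tauto

theorem not_connected_deleteEdges_crossEdges (hA : A.Nonempty) (hAc : Aᶜ.Nonempty) :
    ¬ (G.deleteEdges (crossEdges G A)).Connected := by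
  intro hconn
  obtain ⟨a, ha⟩ := hA
  obtain ⟨b, hb⟩ := hAc
  obtain ⟨p⟩ := hconn.preconnected a b
  obtain ⟨d, -, hfst, hsnd⟩ := p.exists_boundary_dart A ha hb
  obtain ⟨hadj, hnot⟩ := deleteEdges_adj.1 d.adj
  exact hnot (mk_mem_crossEdges.2 ⟨hadj, .inl ⟨hfst, hsnd⟩⟩)

theorem induce_deleteEdges_of_subset_crossEdges {T : Set (Sym2 V)} (hT : T ⊆ crossEdges G A) :
    (G.deleteEdges T).induce A = G.induce A := by
  ext ⟨u, hu⟩ ⟨v, hv⟩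
  have huv : s(u, v) ∉ T := fun h ↦ by
    have := (mk_mem_crossEdges.1 (hT h)).2
    tauto
  simp [huv]

theorem connected_of_induce_of_induce_compl {x y : V} (hA : (G.induce A).Connected)
    (hAc : (G.induce Aᶜ).Connected) (hx : x ∈ A) (hy : y ∈ Aᶜ) (hadj : G.Adj x y) :
    G.Connected := by
  have h := connected_induce_union hA.preconnected hAc.preconnected hx hy hadj
  rw [Set.union_compl_self] at h
  exact (induceUnivIso G).connected_iff.1 h

theorem isBond_crossEdges (hA : (G.induce A).Connected) (hAc : (G.induce Aᶜ).Connected)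
    (hne : (crossEdges G A).Nonempty) : IsBond G (crossEdges G A) := by
  refine ⟨hne, ⟨fun e he ↦ he.1, not_connected_deleteEdges_crossEdges
    (Set.nonempty_coe_sort.1 hA.nonempty) (Set.nonempty_coe_sort.1 hAc.nonempty)⟩, ?_⟩
  rintro T hT - ⟨-, hdisc⟩
  obtain ⟨_, ⟨hadj, x, hx, y, hy, rfl⟩, hxyT⟩ := Set.exists_of_ssubset hT
  refine hdisc (connected_of_induce_of_induce_compl (A := A) ?_ ?_ hx hy
    (deleteEdges_adj.2 ⟨hadj, hxyT⟩))
  · rwa [induce_deleteEdges_of_subset_crossEdges hT.subset]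
  · rwa [induce_deleteEdges_of_subset_crossEdges (crossEdges_compl.symm ▸ hT.subset)]

theorem ncard_edgeSet_induce (G : SimpleGraph V) (S : Set V) :
    (G.induce S).edgeSet.ncard = (G.edgeSet ∩ S.sym2).ncard := by
  have himage : Sym2.map Subtype.val '' (G.induce S).edgeSet = G.edgeSet ∩ S.sym2 := by
    ext ⟨u, v⟩
    constructor
    · rintro ⟨⟨⟨x, hx⟩, ⟨y, hy⟩⟩, hadj, hxy⟩
      rw [← hxy]
      exact ⟨hadj, hx, hy⟩
    · rintro ⟨hadj, hu, hv⟩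
      exact ⟨s(⟨u, hu⟩, ⟨v, hv⟩), hadj, rfl⟩
  rw [← himage, Set.ncard_image_of_injective _ (Sym2.map.injective Subtype.val_injective)]

theorem ncard_crossEdges_add_ncard_edgeSet_induce [Finite V] (G : SimpleGraph V) (A : Set V) :
    (crossEdges G A).ncard + (G.induce A).edgeSet.ncard + (G.induce Aᶜ).edgeSet.ncard =
      G.edgeSet.ncard := by
  have hdisj : Disjoint (G.edgeSet ∩ A.sym2) (G.edgeSet ∩ Aᶜ.sym2) := by
    refine Disjoint.mono inf_le_right inf_le_right (Set.disjoint_left.2 ?_)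
    rintro ⟨u, v⟩ hA hAc
    exact hAc.1 hA.1
  rw [add_assoc, ncard_edgeSet_induce, ncard_edgeSet_induce, ← Set.ncard_union_eq hdisj,
    ← Set.inter_union_distrib_left, crossEdges_eq_sdiff, add_comm,
    Set.ncard_inter_add_ncard_sdiff_eq_ncard]

theorem ncard_crossEdges_add_card_of_isTree [Finite V] (hA : (G.induce A).IsTree)
    (hAc : (G.induce Aᶜ).IsTree) :
    (crossEdges G A).ncard + Nat.card V = G.edgeSet.ncard + 2 := by
  have hcardA := (isTree_iff_connected_and_card.1 hA).2
  have hcardAc := (isTree_iff_connected_and_card.1 hAc).2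
  have hedges := ncard_crossEdges_add_ncard_edgeSet_induce G A
  have hverts := Set.ncard_add_ncard_compl A
  simp only [Nat.card_coe_set_eq] at hcardA hcardAc
  omega

end CrossEdges

theorem zmod_eq_add_natCast_iff_val {n m : ℕ} [NeZero n] (hm : m < n) {i j : ZMod n} :
    j = i + m ↔ j.val = i.val + m ∨ j.val + n = i.val + m := by
  constructor
  · rintro rfl
    have hval : (m : ZMod n).val = m := ZMod.val_natCast_of_lt hm
    obtain h | h := lt_or_ge (i.val + (m : ZMod n).val) n
    · exact .inl (by rw [ZMod.val_add_of_lt h, hval])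
    · exact .inr (by rw [← ZMod.val_add_val_of_le h, hval])
  · rintro (h | h) <;> simpa using congrArg (Nat.cast : ℕ → ZMod n) h

theorem zmod_eq_add_one_iff_val {n : ℕ} [NeZero n] (hn : 1 < n) {i j : ZMod n} :
    j = i + 1 ↔ j.val = i.val + 1 ∨ j.val + n = i.val + 1 := by
  simpa using zmod_eq_add_natCast_iff_val hn (i := i) (j := j)

theorem sym2_mk_add_injective {M : Type*} [AddLeftCancelMonoid M] {c : M} (hc : c + c ≠ 0) :
    Function.Injective fun i : M ↦ s(i, i + c) := by
  intro i j hij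
  obtain ⟨hi, -⟩ | ⟨hi, hj⟩ := Sym2.eq_iff.1 hij
  · exact hi
  · refine absurd ?_ hc
    rw [hi, add_assoc] at hj
    exact add_eq_left.1 hj

namespace GPetersen

variable {n k : ℕ}

theorem inl_adj_inl (hn : n ≠ 1) {i j : ZMod n} :
    (GPetersen n k).Adj (.inl i) (.inl j) ↔ j = i + 1 ∨ i = j + 1 := by
  have : Nontrivial (ZMod n) := ZMod.nontrivial_iff.2 hn
  simp only [GPetersen, fromRel_adj]
  aesop

@[simp]
theorem inl_adj_inr {i j : ZMod n} : (GPetersen n k).Adj (.inl i) (.inr j) ↔ i = j := by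
  simp [GPetersen, fromRel_adj, eq_comm]

@[simp]
theorem inr_adj_inl {i j : ZMod n} : (GPetersen n k).Adj (.inr i) (.inl j) ↔ i = j := by
  rw [adj_comm, inl_adj_inr, eq_comm]

theorem inr_adj_inr (hk : ¬ n ∣ k) {i j : ZMod n} :
    (GPetersen n k).Adj (.inr i) (.inr j) ↔ j = i + k ∨ i = j + k := by
  have : (k : ZMod n) ≠ 0 := by rwa [Ne, ZMod.natCast_eq_zero_iff]
  simp only [GPetersen, fromRel_adj]
  aesop

/-- An indexing of the edges of `P(n, k)` by three copies of `ZMod n`: the outer edges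
`xᵢxᵢ₊₁`, the spokes `xᵢyᵢ`, and the inner edges `yᵢyᵢ₊ₖ`. -/
def edge (n k : ℕ) : ZMod n ⊕ ZMod n ⊕ ZMod n → Sym2 (ZMod n ⊕ ZMod n)
  | .inl i => s(.inl i, .inl (i + 1))
  | .inr (.inl i) => s(.inl i, .inr i)
  | .inr (.inr i) => s(.inr i, .inr (i + k))

theorem edge_injective (h : ¬ n ∣ 2 * k) : Function.Injective (edge n k) := by
  have hone : (1 : ZMod n) + 1 ≠ 0 := fun h2 ↦
    h <| ((ZMod.natCast_eq_zero_iff 2 n).1 (by simpa [one_add_one_eq_two] using h2)).mul_right k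
  have hk : (k : ZMod n) + k ≠ 0 := by
    rw [← ZMod.natCast_eq_zero_iff] at h
    simpa [two_mul] using h
  rintro (i | i | i) (j | j | j) hij
  case inl.inl =>
    exact congrArg _ (sym2_mk_add_injective hone (Sym2.map.injective Sum.inl_injective hij))
  case inr.inl.inr.inl => simpa [edge] using hij
  case inr.inr.inr.inr =>
    exact congrArg (Sum.inr ∘ Sum.inr)
      (sym2_mk_add_injective hk (Sym2.map.injective Sum.inr_injective hij))
  all_goals simp [edge] at hij

theorem range_edge (hn : n ≠ 1) (hk : ¬ n ∣ k) :
    Set.range (edge n k) = (GPetersen n k).edgeSet := by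
  ext ⟨u | u, v | v⟩ <;>
    simp only [Set.mem_range, Sum.exists, mem_edgeSet, inl_adj_inl hn, inr_adj_inr hk, inl_adj_inr,
      inr_adj_inl, edge] <;>
    aesop

theorem ncard_edgeSet [NeZero n] (h : ¬ n ∣ 2 * k) : (GPetersen n k).edgeSet.ncard = 3 * n := by
  have hn : n ≠ 1 := by rintro rfl; exact h (one_dvd _)
  rw [← range_edge hn fun hk ↦ h (hk.mul_left 2), ← Set.image_univ,
    Set.ncard_image_of_injective _ (edge_injective h), Set.ncard_univ]
  simp only [Nat.card_sum, Nat.card_zmod]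
  ring

/-- One half of a partition of `P(n, k)` into two induced trees. Representing indices by
`0, …, n - 1`, it consists of the `xᵢ` with `i < k` or `2k ≤ i` and the `yᵢ` with `i < k`. -/
def treeSide (n k : ℕ) : Set (ZMod n ⊕ ZMod n) :=
  Sum.inl '' {i | i.val < k ∨ 2 * k ≤ i.val} ∪ Sum.inr '' {i | i.val < k}

theorem inl_mem_treeSide {i : ZMod n} : .inl i ∈ treeSide n k ↔ i.val < k ∨ 2 * k ≤ i.val := by
  simp [treeSide]

theorem inr_mem_treeSide {i : ZMod n} : .inr i ∈ treeSide n k ↔ i.val < k := by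
  simp [treeSide]

theorem inl_mem_compl_treeSide {i : ZMod n} :
    .inl i ∈ (treeSide n k)ᶜ ↔ k ≤ i.val ∧ i.val < 2 * k := by
  simp [inl_mem_treeSide]

theorem inr_mem_compl_treeSide {i : ZMod n} : .inr i ∈ (treeSide n k)ᶜ ↔ k ≤ i.val := by
  simp [inr_mem_treeSide]

/-- The first step of the path joining a vertex of `treeSide n k` to the root `xₖ₋₁` of that tree:
`yᵢ` hangs from `xᵢ`, and the path `x₂ₖ, …, xₙ₋₁, x₀, …, xₖ₋₁` is traversed upwards. -/
def treeSideParent (n : ℕ) : ZMod n ⊕ ZMod n → ZMod n ⊕ ZMod n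
  | .inl i => .inl (i + 1)
  | .inr i => .inl i

/-- A rank which decreases from each vertex of `treeSide n k` to its parent. -/
def treeSideRank (n k : ℕ) : ZMod n ⊕ ZMod n → ℕ
  | .inl i => if i.val < k then n - i.val else 2 * n - i.val
  | .inr _ => 2 * n

theorem treeSideParent_mem_and_adj_and_rank_lt (hk : 1 ≤ k) (hkn : 2 * k ≤ n)
    {v : ZMod n ⊕ ZMod n} (hv : v ∈ treeSide n k) (hne : v ≠ .inl (k - 1 : ℕ)) :
    treeSideParent n v ∈ treeSide n k ∧ (GPetersen n k).Adj v (treeSideParent n v) ∧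
      treeSideRank n k (treeSideParent n v) < treeSideRank n k v := by
  have : NeZero n := ⟨by omega⟩
  obtain i | i := v <;> simp only [inl_mem_treeSide, inr_mem_treeSide] at hv <;>
    simp only [treeSideParent, treeSideRank, inl_mem_treeSide, inr_adj_inl, true_and]
  · have hne' : i.val ≠ k - 1 := fun h ↦ hne (by simp [← h])
    have hsucc := (zmod_eq_add_one_iff_val (by omega)).1 (rfl : i + 1 = i + 1)
    have := i.val_lt
    have := (i + 1).val_lt
    refine ⟨by omega, (inl_adj_inl (by omega)).2 (.inl rfl), ?_⟩
    split_ifs <;> omega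
  · rw [if_pos hv]
    omega

theorem eq_treeSideParent_of_adj_of_rank_le (hk : 1 ≤ k) (hkn : 2 * k ≤ n)
    {v w : ZMod n ⊕ ZMod n} (hv : v ∈ treeSide n k) (hw : w ∈ treeSide n k)
    (hadj : (GPetersen n k).Adj v w) (hle : treeSideRank n k w ≤ treeSideRank n k v) :
    w = treeSideParent n v := by
  have : NeZero n := ⟨by omega⟩
  obtain i | i := v <;> obtain j | j := w <;>
    simp only [inl_mem_treeSide, inr_mem_treeSide, treeSideRank] at hv hw hle
  · refine congrArg _ <| ((inl_adj_inl (by omega)).1 hadj).resolve_right fun h ↦ ?_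
    rw [zmod_eq_add_one_iff_val (by omega)] at h
    have := i.val_lt
    have := j.val_lt
    split_ifs at hle <;> omega
  · split_ifs at hle <;> omega
  · exact congrArg _ (inr_adj_inl.1 hadj).symm
  · rw [inr_adj_inr (Nat.not_dvd_of_pos_of_lt hk (by omega)),
      zmod_eq_add_natCast_iff_val (by omega), zmod_eq_add_natCast_iff_val (by omega)] at hadj
    omega

theorem isTree_induce_treeSide (hk : 1 ≤ k) (hkn : 2 * k ≤ n) :
    ((GPetersen n k).induce (treeSide n k)).IsTree := by
  have hroot : ((k - 1 : ℕ) : ZMod n).val = k - 1 := ZMod.val_natCast_of_lt (by omega)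
  exact isTree_induce_of_parent (inl_mem_treeSide.2 (.inl (by omega))) _ _
    (fun _ ↦ treeSideParent_mem_and_adj_and_rank_lt hk hkn)
    fun _ hv _ hw ↦ eq_treeSideParent_of_adj_of_rank_le hk hkn hv hw

/-- The first step of the path joining a vertex outside `treeSide n k` to the root `xₖ` of the
tree on these vertices: `yᵢ` hangs from `yᵢ₋ₖ`, unless the latter lies in `treeSide n k`, and
otherwise from `xᵢ`. -/
def complTreeSideParent (n k : ℕ) : ZMod n ⊕ ZMod n → ZMod n ⊕ ZMod n
  | .inl i => .inl (i - 1)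
  | .inr i => if i.val < 2 * k then .inl i else .inr (i - k)

/-- A rank which decreases from each vertex outside `treeSide n k` to its parent. -/
def complTreeSideRank (n : ℕ) : ZMod n ⊕ ZMod n → ℕ
  | .inl i => i.val
  | .inr i => n + i.val

theorem complTreeSideParent_mem_and_adj_and_rank_lt (hk : 1 ≤ k) (hkn : 2 * k ≤ n)
    {v : ZMod n ⊕ ZMod n} (hv : v ∈ (treeSide n k)ᶜ) (hne : v ≠ .inl (k : ZMod n)) :
    complTreeSideParent n k v ∈ (treeSide n k)ᶜ ∧
      (GPetersen n k).Adj v (complTreeSideParent n k v) ∧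
      complTreeSideRank n (complTreeSideParent n k v) < complTreeSideRank n v := by
  have : NeZero n := ⟨by omega⟩
  obtain i | i := v
  · rw [inl_mem_compl_treeSide] at hv
    have hne' : i.val ≠ k := fun h ↦ hne (by simp [← h])
    have hi : i = i - 1 + 1 := (sub_add_cancel i 1).symm
    have hpred := (zmod_eq_add_one_iff_val (by omega)).1 hi
    have hlt := (i - 1).val_lt
    simp only [complTreeSideParent, complTreeSideRank, inl_mem_compl_treeSide]
    exact ⟨by omega, (inl_adj_inl (by omega)).2 (.inr hi), by omega⟩
  · rw [inr_mem_compl_treeSide] at hv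
    have := i.val_lt
    simp only [complTreeSideParent]
    split_ifs with hlt <;> simp only [complTreeSideRank]
    · exact ⟨inl_mem_compl_treeSide.2 ⟨hv, hlt⟩, inr_adj_inl.2 rfl, by omega⟩
    · have hi : i = i - k + k := (sub_add_cancel i (k : ZMod n)).symm
      have hpred := (zmod_eq_add_natCast_iff_val (by omega)).1 hi
      have := (i - k).val_lt
      exact ⟨inr_mem_compl_treeSide.2 (by omega),
        (inr_adj_inr (Nat.not_dvd_of_pos_of_lt hk (by omega))).2 (.inr hi), by omega⟩

theorem eq_complTreeSideParent_of_adj_of_rank_le (hk : 1 ≤ k) (hkn : 2 * k ≤ n)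
    {v w : ZMod n ⊕ ZMod n} (hv : v ∈ (treeSide n k)ᶜ) (hw : w ∈ (treeSide n k)ᶜ)
    (hadj : (GPetersen n k).Adj v w) (hle : complTreeSideRank n w ≤ complTreeSideRank n v) :
    w = complTreeSideParent n k v := by
  have : NeZero n := ⟨by omega⟩
  obtain i | i := v <;> obtain j | j := w <;>
    simp only [inl_mem_compl_treeSide, inr_mem_compl_treeSide, complTreeSideRank] at hv hw hle <;>
    simp only [complTreeSideParent]
  · refine congrArg _ <| eq_sub_of_add_eq
      (((inl_adj_inl (by omega)).1 hadj).resolve_left fun h ↦ ?_).symm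
    rw [zmod_eq_add_one_iff_val (by omega)] at h
    omega
  · have := i.val_lt
    omega
  · obtain rfl := inr_adj_inl.1 hadj
    rw [if_pos hw.2]
  · have := i.val_lt
    have := j.val_lt
    obtain h | h := (inr_adj_inr (Nat.not_dvd_of_pos_of_lt hk (by omega))).1 hadj
    · rw [zmod_eq_add_natCast_iff_val (by omega)] at h
      omega
    · rw [if_neg, eq_sub_of_add_eq h.symm]
      rw [zmod_eq_add_natCast_iff_val (by omega)] at h
      omega

theorem isTree_induce_compl_treeSide (hk : 1 ≤ k) (hkn : 2 * k ≤ n) :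
    ((GPetersen n k).induce (treeSide n k)ᶜ).IsTree := by
  have hroot : (k : ZMod n).val = k := ZMod.val_natCast_of_lt (by omega)
  exact isTree_induce_of_parent (inl_mem_compl_treeSide.2 (by omega)) _ _
    (fun _ ↦ complTreeSideParent_mem_and_adj_and_rank_lt hk hkn)
    fun _ hv _ hw ↦ eq_complTreeSideParent_of_adj_of_rank_le hk hkn hv hw

end GPetersen

/-- `P(n,k)` is dual Hamiltonian: its vertex set splits into two nonempty parts
both inducing trees, equivalently it has a bond of size `n + 2 = |E| - |V| + 2`. -/
theorem gPetersen_dual_hamiltonian (n k : ℕ) (hn : 3 ≤ n) (hk1 : 1 ≤ k) (hk2 : 2 * k < n) :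
    (∃ A : Set (ZMod n ⊕ ZMod n), A.Nonempty ∧ Aᶜ.Nonempty ∧
        ((GPetersen n k).induce A).IsTree ∧ ((GPetersen n k).induce Aᶜ).IsTree) ∧
    (∃ B : Set (Sym2 (ZMod n ⊕ ZMod n)), IsBond (GPetersen n k) B ∧ B.ncard = n + 2) := by
  have : NeZero n := ⟨by omega⟩
  have hA := GPetersen.isTree_induce_treeSide hk1 hk2.le
  have hAc := GPetersen.isTree_induce_compl_treeSide hk1 hk2.le
  have hedges : (GPetersen n k).edgeSet.ncard = 3 * n :=
    GPetersen.ncard_edgeSet (Nat.not_dvd_of_pos_of_lt (by omega) hk2)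
  have hcard : (crossEdges (GPetersen n k) (GPetersen.treeSide n k)).ncard = n + 2 := by
    have h := ncard_crossEdges_add_card_of_isTree hA hAc
    rw [hedges, Nat.card_sum, Nat.card_zmod] at h
    omega
  have hne := Set.nonempty_of_ncard_ne_zero (hcard.trans_ne (by omega))
  exact ⟨⟨_, Set.nonempty_coe_sort.1 hA.connected.nonempty,
    Set.nonempty_coe_sort.1 hAc.connected.nonempty, hA, hAc⟩,
    _, isBond_crossEdges hA.connected hAc.connected hne, hcard⟩
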